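/- Let w = (w_1,...,w_n) ∈ ℂ^n and let δ_S = Σ_{i=1}^n w_i x_i ∂_{x_i} on Ô_n = ℂ[[x_1,...,x_n]]. Then every ideal I ⊆ Ô_n with δ_S(I) ⊆ I admits a finite system of generators consisting of eigenfunctions of δ_S: there exist h_1,...,h_m ∈ Ô_n and d_1,...,d_m ∈ ℂ such that I = ⟨h_1,...,h_m⟩ and δ_S(h_i) = d_i h_i for i = 1,...,m. -/

import Mathlib

set_option maxHeartbeats 1000000
set_option synthInstance.maxHeartbeats 1000000

noncomputable section

/-- The ring `Ô_n = ℂ[[x₁, …, xₙ]]` of formal power series. -/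
abbrev FPS (n : ℕ) : Type := MvPowerSeries (Fin n) ℂ

/-- The `i`-th partial derivative of a formal power series. -/
def fpd {n : ℕ} (i : Fin n) (f : FPS n) : FPS n :=
  fun m => ((m i : ℂ) + 1) * MvPowerSeries.coeff (m + Finsupp.single i 1) f

/-- The action `δ(f) = Σ aᵢ ∂f/∂xᵢ` of a formal vector field `δ = Σ aᵢ ∂ᵢ`
(given by its coefficients `aᵢ ∈ Ô_n`) on a formal power series `f`. -/
def applyPS {n : ℕ} (δ : Fin n → FPS n) (f : FPS n) : FPS n := ∑ i, δ i * fpd i f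

/-- The linear part `j¹δ` of a formal vector field, as the matrix `(∂δⱼ/∂xᵢ)(0)`. -/
def linPartPS {n : ℕ} (δ : Fin n → FPS n) : Matrix (Fin n) (Fin n) ℂ :=
  Matrix.of fun i j => MvPowerSeries.coeff (Finsupp.single i 1) (δ j)

/-- The semisimple (Euler) vector field `δ_S = Σ wᵢ xᵢ ∂ᵢ` attached to weights `w`. -/
def eulerPS {n : ℕ} (w : Fin n → ℂ) : Fin n → FPS n :=
  fun j => MvPowerSeries.C (w j) * MvPowerSeries.X j

/-- `δ(0) = 0`: all coefficients of the vector field lie in the maximal ideal. -/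
def VanishAt0 {n : ℕ} (δ : Fin n → FPS n) : Prop :=
  ∀ j, MvPowerSeries.constantCoeff (δ j) = 0

/-- Vanishing of the Lie bracket `[δ, η] = 0` of two formal vector fields,
componentwise: `δ(ηⱼ) - η(δⱼ) = 0` for all `j`. -/
def CommutePS {n : ℕ} (δ η : Fin n → FPS n) : Prop :=
  ∀ j, applyPS δ (η j) = applyPS η (δ j)

/-! The Euler derivation is diagonal in the monomials: `x^m ↦ ⟨w, m⟩ x^m`. On any finite set of
exponents, the projection to a weight space of a diagonal operator agrees with a polynomial in the
operator, by Lagrange interpolation at the finitely many weights that occur. Ideals of a Noetherian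
power series ring are closed for coefficientwise convergence, by Krull's intersection theorem, so
an invariant ideal contains the weight components of its elements. These components generate it,
again because the ideal they span is closed, and by Noetherianity finitely many of them suffice. -/

open MvPowerSeries

section Closed

variable {σ R : Type*}

theorem mem_span_X_pow_of_coeff_eq_zero [CommRing R] (s : Finset σ) (N : ℕ)
    {f : MvPowerSeries σ R} (hf : ∀ m, (∀ i ∈ s, m i < N) → coeff m f = 0) :
    f ∈ Ideal.span ((fun i => (X i : MvPowerSeries σ R) ^ N) '' s) := by
  classical
  induction s using Finset.induction_on generalizing f with
  | empty =>
    have hf_zero : f = 0 := MvPowerSeries.ext fun m => hf m (by simp)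
    exact hf_zero ▸ zero_mem _
  | insert a s _ ih =>
    let high : MvPowerSeries σ R := fun m => if N ≤ m a then coeff m f else 0
    have coeff_high (m : σ →₀ ℕ) : coeff m high = if N ≤ m a then coeff m f else 0 := rfl
    have high_mem : high ∈ Ideal.span ((fun i => (X i : MvPowerSeries σ R) ^ N) '' ↑(insert a s)) :=
      Ideal.mem_of_dvd _ (X_pow_dvd_iff.2 fun m hm => by rw [coeff_high, if_neg hm.not_ge])
        (Ideal.subset_span ⟨a, by simp, rfl⟩)
    have low_mem : f - high ∈ Ideal.span ((fun i => (X i : MvPowerSeries σ R) ^ N) '' s) := by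
      refine ih fun m hm => ?_
      rw [map_sub, coeff_high]
      split_ifs with hma
      · exact sub_self _
      · rw [sub_zero]
        exact hf m (by simpa using ⟨not_le.1 hma, hm⟩)
    rw [← sub_add_cancel f high]
    exact add_mem (Ideal.span_mono (Set.image_mono (by simp)) low_mem) high_mem

theorem exists_finset_forall_mem_span_range_X_pow [Finite σ] [CommRing R] (N : ℕ) :
    ∃ F : Finset (σ →₀ ℕ), ∀ f : MvPowerSeries σ R, (∀ m ∈ F, coeff m f = 0) →
      f ∈ Ideal.span (Set.range X) ^ N := by
  classical
  have := Fintype.ofFinite σ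
  let box : Finset (σ →₀ ℕ) := Finset.Iic (Finsupp.equivFunOnFinite.symm fun _ => N)
  refine ⟨box, fun f hf => ?_⟩
  have f_mem : f ∈ Ideal.span ((fun i => X i ^ N) '' (Finset.univ : Finset σ)) :=
    mem_span_X_pow_of_coeff_eq_zero Finset.univ N fun m hm =>
      hf m (Finset.mem_Iic.2 fun i => (hm i (Finset.mem_univ i)).le)
  have X_pow_mem (i : σ) : (X i : MvPowerSeries σ R) ^ N ∈ Ideal.span (Set.range X) ^ N :=
    Ideal.pow_mem_pow (Ideal.subset_span (Set.mem_range_self i)) N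
  exact Ideal.span_le.2 (Set.image_subset_iff.2 fun i _ => X_pow_mem i) f_mem

theorem mem_of_forall_finset_exists_coeff_eq [Finite σ] [CommRing R] [IsNoetherianRing R]
    {J : Ideal (MvPowerSeries σ R)} {f : MvPowerSeries σ R}
    (h : ∀ F : Finset (σ →₀ ℕ), ∃ g ∈ J, ∀ m ∈ F, coeff m g = coeff m f) : f ∈ J := by
  let 𝔪 : Ideal (MvPowerSeries σ R) := Ideal.span (Set.range X)
  have : IsHausdorff 𝔪 (MvPowerSeries σ R ⧸ J) :=
    .of_le_jacobson _ _ (IsAdicComplete.le_jacobson_bot 𝔪)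
  rw [← Submodule.Quotient.mk_eq_zero]
  refine IsHausdorff.haus this _ fun N => ?_
  obtain ⟨F, hF⟩ := exists_finset_forall_mem_span_range_X_pow (σ := σ) (R := R) N
  obtain ⟨g, hgJ, hgf⟩ := h F
  have sub_mem : f - g ∈ 𝔪 ^ N := hF _ fun m hm => by rw [map_sub, hgf m hm, sub_self]
  have mk_eq : (Submodule.Quotient.mk f : MvPowerSeries σ R ⧸ J) =
      (f - g) • Submodule.Quotient.mk 1 := by
    rwa [← Submodule.Quotient.mk_smul, smul_eq_mul, mul_one, Submodule.Quotient.eq, sub_sub_cancel]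
  rw [SModEq.zero, mk_eq]
  exact Submodule.smul_mem_smul sub_mem trivial

end Closed

theorem aeval_apply_mem_of_forall_mem {k M : Type*} [CommSemiring k] [AddCommMonoid M] [Module k M]
    {D : Module.End k M} {p : Submodule k M} (hp : ∀ x ∈ p, D x ∈ p) (q : Polynomial k) {x : M}
    (hx : x ∈ p) : Polynomial.aeval D q x ∈ p := by
  induction q using Polynomial.induction_on' with
  | add q r hq hr => simpa only [map_add, LinearMap.add_apply] using add_mem hq hr
  | monomial n c =>
    rw [Polynomial.aeval_monomial, Module.End.mul_apply, Module.algebraMap_end_apply,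
      Module.End.pow_apply]
    exact p.smul_mem c (Set.MapsTo.iterate hp n hx)

section Diagonal

variable {σ k R : Type*}

/-- The algebra of diagonal operators on power series: `μ` acts by `x^m ↦ μ m • x^m`. The Euler
derivation with weights `w` is the case `μ = Finsupp.weight w`, and the projection to a weight
space is the case of an indicator function. -/
def diagonalOperator [CommSemiring k] [Semiring R] [Algebra k R] :
    ((σ →₀ ℕ) → k) →ₐ[k] Module.End k (MvPowerSeries σ R) where
  toFun μ :=
    { toFun := fun f m => μ m • coeff m f
      map_add' := fun f g => funext fun m => smul_add (μ m) (coeff m f) (coeff m g)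
      map_smul' := fun c f => funext fun m => smul_comm (μ m) c (coeff m f) }
  map_one' := LinearMap.ext fun f => funext fun m => one_smul k (coeff m f)
  map_mul' μ ν := LinearMap.ext fun f => funext fun m => mul_smul (μ m) (ν m) (coeff m f)
  map_zero' := LinearMap.ext fun f => funext fun m => zero_smul k (coeff m f)
  map_add' μ ν := LinearMap.ext fun f => funext fun m => add_smul (μ m) (ν m) (coeff m f)
  commutes' _ := rfl

section Semiring

variable [CommSemiring k] [Semiring R] [Algebra k R]

theorem coeff_diagonalOperator (μ : (σ →₀ ℕ) → k) (f : MvPowerSeries σ R) (m : σ →₀ ℕ) :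
    coeff m (diagonalOperator μ f) = μ m • coeff m f :=
  rfl

theorem coeff_aeval_diagonalOperator (μ : (σ →₀ ℕ) → k) (p : Polynomial k)
    (f : MvPowerSeries σ R) (m : σ →₀ ℕ) :
    coeff m (Polynomial.aeval (diagonalOperator μ) p f) = p.eval (μ m) • coeff m f := by
  rw [Polynomial.aeval_algHom_apply, coeff_diagonalOperator, Polynomial.aeval_pi_apply₂,
    Polynomial.coe_aeval_eq_eval]

/-- The projection of power series to their component of weight `a`, the part supported on the
exponents `m` with `μ m = a`. It is encoded as the diagonal operator of an indicator function. -/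
def weightProjection (μ : (σ →₀ ℕ) → k) (a : k) : Module.End k (MvPowerSeries σ R) :=
  diagonalOperator (Set.indicator {a} 1 ∘ μ)

theorem diagonalOperator_weightProjection (μ : (σ →₀ ℕ) → k) (a : k) (f : MvPowerSeries σ R) :
    diagonalOperator μ (weightProjection μ a f) = a • weightProjection μ a f := by
  have mul_indicator : μ * (Set.indicator {a} 1 ∘ μ) = a • (Set.indicator {a} 1 ∘ μ) := by
    ext m
    by_cases hm : μ m = a <;> simp [hm]
  rw [weightProjection, ← Module.End.mul_apply, ← map_mul, mul_indicator, map_smul,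
    LinearMap.smul_apply]

theorem coeff_sum_weightProjection (μ : (σ →₀ ℕ) → k) (f : MvPowerSeries σ R) {A : Finset k}
    {m : σ →₀ ℕ} (hm : μ m ∈ A) : coeff m (∑ a ∈ A, weightProjection μ a f) = coeff m f := by
  classical
  simp [weightProjection, coeff_diagonalOperator, Pi.single_apply, hm]

end Semiring

variable [Field k] [CommRing R] [IsNoetherianRing R] [Algebra k R] [Finite σ]
  {μ : (σ →₀ ℕ) → k} {I : Ideal (MvPowerSeries σ R)}

theorem diagonalOperator_comp_mem (hI : ∀ g ∈ I, diagonalOperator μ g ∈ I) (φ : k → k)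
    {f : MvPowerSeries σ R} (hf : f ∈ I) : diagonalOperator (φ ∘ μ) f ∈ I := by
  classical
  refine mem_of_forall_finset_exists_coeff_eq fun F => ?_
  let p : Polynomial k := Lagrange.interpolate (F.image μ) id φ
  have eval_p (m : σ →₀ ℕ) (hm : m ∈ F) : p.eval (μ m) = φ (μ m) :=
    Lagrange.eval_interpolate_at_node φ (Set.injOn_id _) (Finset.mem_image_of_mem μ hm)
  refine ⟨Polynomial.aeval (diagonalOperator μ) p f,
    aeval_apply_mem_of_forall_mem (p := I.restrictScalars k) hI p hf, fun m hm => ?_⟩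
  rw [coeff_aeval_diagonalOperator, eval_p m hm, coeff_diagonalOperator, Function.comp_apply]

theorem eq_span_setOf_diagonalOperator_eq_smul (hI : ∀ g ∈ I, diagonalOperator μ g ∈ I) :
    I = Ideal.span {g ∈ I | ∃ a : k, diagonalOperator μ g = a • g} := by
  classical
  refine le_antisymm (fun f hf => ?_) (Ideal.span_le.2 fun g hg => hg.1)
  refine mem_of_forall_finset_exists_coeff_eq fun F =>
    ⟨∑ a ∈ F.image μ, weightProjection μ a f, ?_, fun m hm =>
      coeff_sum_weightProjection μ f (Finset.mem_image_of_mem μ hm)⟩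
  exact sum_mem fun a _ => Ideal.subset_span
    ⟨diagonalOperator_comp_mem hI _ hf, a, diagonalOperator_weightProjection μ a f⟩

theorem invariant_ideal_weighted_homogeneous_generators_general (μ : (σ →₀ ℕ) → k)
    (I : Ideal (MvPowerSeries σ R)) (hI : ∀ g ∈ I, diagonalOperator μ g ∈ I) :
    ∃ (m : ℕ) (h : Fin m → MvPowerSeries σ R) (d : Fin m → k),
      I = Ideal.span (Set.range h) ∧ ∀ i, diagonalOperator μ (h i) = d i • h i := by
  have span_eq := eq_span_setOf_diagonalOperator_eq_smul hI
  obtain ⟨S, hS, hIS⟩ := (Submodule.fg_span_iff_fg_span_finset_subset _).1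
    (span_eq ▸ IsNoetherian.noetherian I)
  obtain ⟨m, h, hrange⟩ := S.finite_toSet.fin_embedding
  choose d hd using fun i => (hS (hrange ▸ Set.mem_range_self i)).2
  exact ⟨m, h, d, by rw [hrange, span_eq]; exact hIS, hd⟩

end Diagonal

section Euler

variable {σ R : Type*} [CommSemiring R]

theorem X_mul_pderiv (i : σ) (f : MvPowerSeries σ R) :
    X i * pderiv R i f = diagonalOperator (fun m => (m i : R)) f := by
  classical
  ext m
  rw [X_def, coeff_monomial_mul, coeff_pderiv, coeff_diagonalOperator, smul_eq_mul, one_mul]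
  split_ifs with h
  · have hi : 1 ≤ m i := Finsupp.single_le_iff.1 h
    rw [tsub_add_cancel_of_le h, Finsupp.tsub_apply, Finsupp.single_eq_same, ← Nat.cast_add_one,
      Nat.sub_add_cancel hi, mul_comm]
  · have hi : m i = 0 := by simpa [Finsupp.single_le_iff] using h
    rw [hi, Nat.cast_zero, zero_mul]

theorem sum_C_mul_X_mul_pderiv [Fintype σ] (w : σ → R) (f : MvPowerSeries σ R) :
    ∑ i, C (w i) * X i * pderiv R i f = diagonalOperator (Finsupp.weight w) f := by
  ext m
  simp only [mul_assoc, X_mul_pderiv, map_sum, coeff_C_mul, coeff_diagonalOperator,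
    Finsupp.weight_eq_sum, Finset.sum_mul, nsmul_eq_mul, smul_eq_mul]
  exact Finset.sum_congr rfl fun i _ => mul_left_comm _ _ _

end Euler

theorem fpd_eq_pderiv {n : ℕ} (i : Fin n) (f : FPS n) : fpd i f = pderiv ℂ i f := by
  ext m
  rw [coeff_pderiv, mul_comm]
  rfl

theorem applyPS_eulerPS {n : ℕ} (w : Fin n → ℂ) (f : FPS n) :
    applyPS (eulerPS w) f = diagonalOperator (Finsupp.weight w) f := by
  simp only [applyPS, eulerPS, fpd_eq_pderiv, sum_C_mul_X_mul_pderiv]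

/-- Theorem 3.1 (d): any `δ_S`-invariant ideal of `Ô_n` admits a finite system of
generators which are eigenfunctions of `δ_S`, i.e. weighted homogeneous elements. -/
theorem invariant_ideal_weighted_homogeneous_generators (n : ℕ) (w : Fin n → ℂ)
    (I : Ideal (FPS n)) (hI : ∀ g ∈ I, applyPS (eulerPS w) g ∈ I) :
    ∃ (m : ℕ) (h : Fin m → FPS n) (d : Fin m → ℂ),
      I = Ideal.span (Set.range h) ∧
      ∀ i, applyPS (eulerPS w) (h i) = MvPowerSeries.C (d i) * h i := by
  simpa only [applyPS_eulerPS, smul_eq_C_mul] using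
    invariant_ideal_weighted_homogeneous_generators_general (Finsupp.weight w) I
      fun g hg => applyPS_eulerPS w g ▸ hI g hg

end
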